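/- arXiv:2509.18931 — 2 statements merged into one kernel-verified Lean document; each statement's English description precedes it below -/
import Mathlib

section
/- For any 0 ≤ s ≤ n−2 and 1 ≤ g ≤ min{s+1, ⌊(n−s)/2⌋}, one has c_{s,g} ≤ (C(2(n−s), n−s) / C(2n−s, n)) · C(s+1, g) · 2^{g−1} / ((g−1)! · (n−s−g)^{g−1}). -/
open MeasureTheory Filter

namespace RandomHypercube

/-- Index of a (potential) hypercube edge: the lower endpoint `A` together with the
direction `i` that is added, representing the edge from `A` to `A ∪ {i}`. -/
abbrev EdgeIdx (n : ℕ) := Finset (Fin n) × Fin n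

/-- The sample space: an i.i.d. Uniform[0,1] weight for each edge index. -/
abbrev CubeOmega (n : ℕ) := EdgeIdx n → ℝ

/-- The product of uniform measures on [0,1], one for each edge. -/
noncomputable def cubeMeasure (n : ℕ) : Measure (CubeOmega n) :=
  Measure.pi fun _ => (volume : Measure ℝ).restrict (Set.Icc 0 1)

/-- The vertex visited by the direct path associated to the permutation `σ`
just before taking its `j`-th step: the image under `σ` of `{0, …, j-1}`. -/
def initSeg (n : ℕ) (σ : Equiv.Perm (Fin n)) (j : Fin n) : Finset (Fin n) :=
  (Finset.univ.filter fun i => i < j).image σ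

/-- The edge used in the `j`-th step of the direct path associated to `σ`. -/
def pathEdge (n : ℕ) (σ : Equiv.Perm (Fin n)) (j : Fin n) : EdgeIdx n :=
  (initSeg n σ j, σ j)

/-- The direct path associated to `σ` is accessible if its successive edge
weights are strictly increasing. -/
def Accessible (n : ℕ) (σ : Equiv.Perm (Fin n)) (ω : CubeOmega n) : Prop :=
  StrictMono fun j : Fin n => ω (pathEdge n σ j)

/-- The number of accessible direct paths from `∅` to `[n]`. -/
noncomputable def X (n : ℕ) (ω : CubeOmega n) : ℕ :=
  Nat.card {σ : Equiv.Perm (Fin n) // Accessible n σ ω}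


/-- The set of steps `j` at which the direct paths of `σ` and `σ'` use the same edge
(shared edges necessarily occur at the same level in both paths). -/
def sharedSteps (n : ℕ) (σ σ' : Equiv.Perm (Fin n)) : Finset (Fin n) :=
  Finset.univ.filter fun j => pathEdge n σ j = pathEdge n σ' j

/-- Given the sorted list `l` of steps (levels) of the shared edges, the gap vector:
the number of edges before the first shared edge, strictly between consecutive shared
edges, and after the last shared edge. -/
def gapsOfList (n : ℕ) (l : List ℕ) : List ℕ :=
  List.zipWith (fun a b => b - a) (0 :: l.map (· + 1)) (l ++ [n])

/-- The gap vector of the direct path of `σ'` relative to that of `σ`. -/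
def gapVector (n : ℕ) (σ σ' : Equiv.Perm (Fin n)) : List ℕ :=
  gapsOfList n (((sharedSteps n σ σ').sort (· ≤ ·)).map Fin.val)

/-- The number of (nontrivial) gaps between the direct paths of `σ` and `σ'`:
the number of nonzero entries of the gap vector. -/
def numGaps (n : ℕ) (σ σ' : Equiv.Perm (Fin n)) : ℕ :=
  ((gapVector n σ σ').filter (· != 0)).length

/-- The probability that the direct paths of `σ` and `σ'` are both accessible. -/
noncomputable def pairProb (n : ℕ) (σ σ' : Equiv.Perm (Fin n)) : ℝ :=
  (cubeMeasure n {ω | Accessible n σ ω ∧ Accessible n σ' ω}).toReal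

/-- `c n s g`: the sum, over all ordered pairs of direct paths sharing exactly `s`
edges with `g` gaps, of the probability that both paths are accessible. -/
noncomputable def c (n s g : ℕ) : ℝ :=
  ∑ p ∈ Finset.univ.filter
      (fun p : Equiv.Perm (Fin n) × Equiv.Perm (Fin n) =>
        (sharedSteps n p.1 p.2).card = s ∧ numGaps n p.1 p.2 = g),
    pairProb n p.1 p.2

/-- `w m`: the number of direct paths from `∅` to `[m]` in the `m`-dimensional hypercube
that are edge-disjoint from the canonical path (the identity permutation). -/
noncomputable def w (m : ℕ) : ℕ :=
  Nat.card {σ : Equiv.Perm (Fin m) // sharedSteps m σ 1 = ∅}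

/-! Two direct paths sharing `s` edges use `2 * n - s` edges, whose weights are in uniformly random
relative order by exchangeability. If both paths are accessible, then every shared edge has a
forced rank, and the order is determined by which of the remaining `2(n - s)` ranks go to the
unshared edges of the first path. Hence the pair is accessible with probability at most
`C(2(n - s), n - s) / (2 * n - s)!`.

It remains to count pairs. By symmetry the first path may be taken to be that of the identity. The
second one is then a permutation preserving each of the `g` nonempty gaps, whose sizes are at least
`2` and add up to `n - s`; for given shared edges there are at most
`∏ gap! ≤ 2 ^ (g - 1) * (n - s - 2 * g + 2)!` of these. The shared edges are in turn determined by
the gap vector, hence by the choice of its `g` nonzero entries among `s + 1` and the distribution of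
the excess `n - s - 2 * g` over them.
-/

open Finset ProbabilityTheory
open scoped ENNReal Nat

section Averaging

variable {Ω α β ι : Type*} [Fintype α] [Fintype ι] {mΩ : MeasurableSpace Ω} [MeasurableSpace β]

open Classical in
theorem card_mul_measure_le (μ : Measure Ω) [IsProbabilityMeasure μ] {T : ι → Ω → Ω}
    (hT : ∀ i, MeasurePreserving (T i) μ μ) {A : Set Ω} (hA : MeasurableSet A) {K : ℕ}
    (hK : ∀ᵐ ω ∂μ, #{i | T i ω ∈ A} ≤ K) :
    (Fintype.card ι : ℝ≥0∞) * μ A ≤ K :=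
  calc (Fintype.card ι : ℝ≥0∞) * μ A = ∑ i, μ (T i ⁻¹' A) := by
        simp [(hT _).measure_preimage hA.nullMeasurableSet]
    _ = ∑ i, ∫⁻ ω, (T i ⁻¹' A).indicator 1 ω ∂μ := by
        simp_rw [lintegral_indicator_one ((hT _).measurable hA)]
    _ = ∫⁻ ω, ∑ i, (T i ⁻¹' A).indicator 1 ω ∂μ :=
        (lintegral_finsetSum _ fun i _ ↦ measurable_one.indicator ((hT i).measurable hA)).symm
    _ ≤ ∫⁻ _, (K : ℝ≥0∞) ∂μ := by
        refine lintegral_mono_ae (hK.mono fun ω hω ↦ ?_)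
        simpa [Set.indicator_apply] using hω
    _ = K := by simp

variable (μ : Measure β)

theorem ae_pi_injective [MeasurableEq β] [IsProbabilityMeasure μ] [NullSingletonClass μ] :
    ∀ᵐ ω ∂Measure.pi fun _ : α ↦ μ, Function.Injective ω := by
  have ne_of_ne (i j : α) (hij : i ≠ j) : ∀ᵐ ω ∂Measure.pi fun _ : α ↦ μ, ω i ≠ ω j := by
    have hindep := (iIndepFun_pi (μ := fun _ : α ↦ μ) (X := fun _ ↦ id)
      fun _ ↦ aemeasurable_id).indepFun hij
    have hlaw : (Measure.pi fun _ : α ↦ μ).map (fun ω ↦ (ω i, ω j)) = μ.prod μ := by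
      refine (hindep.map_prod_eq_prod_map_map
        (measurable_pi_apply i).aemeasurable (measurable_pi_apply j).aemeasurable).trans ?_
      exact congrArg₂ _ (measurePreserving_eval _ i).map_eq (measurePreserving_eval _ j).map_eq
    have hdiag : ∀ᵐ x ∂μ.prod μ, x ∉ Set.diagonal β :=
      measure_eq_zero_iff_ae_notMem.1 <|
        Measure.measure_prod_null_of_ae_null measurableSet_diagonal <|
          ae_of_all _ fun x ↦ by simp [Set.preimage, Set.diagonal]
    rw [← hlaw] at hdiag
    exact ae_of_ae_map (p := (· ∉ Set.diagonal β)) (by fun_prop) hdiag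
  have : ∀ᵐ ω ∂Measure.pi fun _ : α ↦ μ, ∀ i j, i ≠ j → ω i ≠ ω j :=
    ae_all_iff.2 fun i ↦ ae_all_iff.2 fun j ↦ eventually_imp_distrib_left.2 (ne_of_ne i j)
  exact this.mono fun ω hω i j ↦ not_imp_not.1 (hω i j)

theorem measurePreserving_comp_perm [SigmaFinite μ] (τ : Equiv.Perm α) :
    MeasurePreserving (fun ω : α → β ↦ ω ∘ τ) (Measure.pi fun _ ↦ μ) (Measure.pi fun _ ↦ μ) :=
  measurePreserving_arrowCongr' _ _ τ.symm (.refl β) fun _ ↦ .id μ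

end Averaging

section LevelCover

variable {ι E : Type*}

/-- Two injective families `p`, `q` that together exhaust `E` and whose common terms carry the same
index. The model case is the set of edges used by two direct paths, listed level by level. -/
structure IsLevelCover (p q : ι → E) : Prop where
  left_injective : Function.Injective p
  right_injective : Function.Injective q
  index_eq : ∀ i j, p i = q j → i = j
  exhausts : ∀ e, (∃ i, p i = e) ∨ ∃ i, q i = e

namespace IsLevelCover

variable {p q : ι → E}

theorem symm (h : IsLevelCover p q) : IsLevelCover q p :=
  ⟨h.right_injective, h.left_injective, fun i j hij ↦ (h.index_eq j i hij.symm).symm,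
    fun e ↦ (h.exhausts e).symm⟩

theorem range_right (h : IsLevelCover p q) : Set.range q = (p '' {j | p j ≠ q j})ᶜ := by
  ext e
  constructor
  · rintro ⟨j, rfl⟩ ⟨i, hi, hij⟩
    obtain rfl := h.index_eq i j hij
    exact hi hij
  · intro he
    obtain ⟨i, rfl⟩ | hq := h.exhausts e
    · exact ⟨i, (not_not.1 fun hi ↦ he ⟨i, hi, rfl⟩).symm⟩
    · exact hq

theorem card_eq [Fintype ι] [Fintype E] [DecidableEq E] (h : IsLevelCover p q) :
    Fintype.card E = Fintype.card ι + #{j | p j ≠ q j} := by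
  have himage : univ.image q = (({j | p j ≠ q j} : Finset ι).image p)ᶜ := by
    simpa [← coe_inj] using h.range_right
  have hcard := congrArg card himage
  rw [card_image_of_injective _ h.right_injective, card_compl,
    card_image_of_injective _ h.left_injective, card_univ] at hcard
  have hle := card_le_univ (({j | p j ≠ q j} : Finset ι).image p)
  rw [card_image_of_injective _ h.left_injective] at hle
  omega

end IsLevelCover

end LevelCover

section MonotonePerms

variable {ι E : Type*} [LinearOrder ι] [LinearOrder E] {p q : ι → E}

namespace IsLevelCover

theorem preimage_Iio (h : IsLevelCover p q) {τ : Equiv.Perm E} (hp : StrictMono (τ ∘ p))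
    (hq : StrictMono (τ ∘ q)) {j : ι} (hj : p j = q j) :
    τ ⁻¹' Set.Iio (τ (p j)) = p '' Set.Iio j ∪ q '' Set.Iio j := by
  have hlt_p (i : ι) : τ (p i) < τ (p j) ↔ i < j := hp.lt_iff_lt
  have hlt_q (i : ι) : τ (q i) < τ (p j) ↔ i < j := hj ▸ hq.lt_iff_lt
  ext e
  simp only [Set.mem_preimage, Set.mem_Iio, Set.mem_union, Set.mem_image]
  constructor
  · obtain ⟨i, rfl⟩ | ⟨i, rfl⟩ := h.exhausts e
    · exact fun hi ↦ .inl ⟨i, (hlt_p i).1 hi, rfl⟩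
    · exact fun hi ↦ .inr ⟨i, (hlt_q i).1 hi, rfl⟩
  · rintro (⟨i, hi, rfl⟩ | ⟨i, hi, rfl⟩)
    exacts [(hlt_p i).2 hi, (hlt_q i).2 hi]

/- A common term is comparable with every other term, so the number of values below it is forced. -/
theorem apply_eq_apply [Finite E] (h : IsLevelCover p q) {τ τ' : Equiv.Perm E}
    (hp : StrictMono (τ ∘ p)) (hq : StrictMono (τ ∘ q)) (hp' : StrictMono (τ' ∘ p))
    (hq' : StrictMono (τ' ∘ q)) {j : ι} (hj : p j = q j) : τ (p j) = τ' (p j) := by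
  have hcard : (Set.Iio (τ (p j))).ncard = (Set.Iio (τ' (p j))).ncard := by
    rw [← Set.ncard_preimage_of_injective_subset_range (f := τ) τ.injective (by simp),
      h.preimage_Iio hp hq hj, ← h.preimage_Iio hp' hq' hj,
      Set.ncard_preimage_of_injective_subset_range τ'.injective (by simp)]
  apply Set.Iio_injective
  rcases le_total (τ (p j)) (τ' (p j)) with hle | hle
  · exact Set.eq_of_subset_of_ncard_le (Set.Iio_subset_Iio hle) hcard.ge
  · exact (Set.eq_of_subset_of_ncard_le (Set.Iio_subset_Iio hle) hcard.le).symm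

theorem comp_right_eq [WellFoundedLT ι] (h : IsLevelCover p q) {τ τ' : Equiv.Perm E}
    (hq : StrictMono (τ ∘ q)) (hq' : StrictMono (τ' ∘ q))
    (heq : τ ∘ p '' {j | p j ≠ q j} = τ' ∘ p '' {j | p j ≠ q j}) : τ ∘ q = τ' ∘ q := by
  rw [← hq.range_inj hq', Set.range_comp, Set.range_comp, h.range_right,
    Set.image_compl_eq τ.bijective, Set.image_compl_eq τ'.bijective, ← Set.image_comp,
    ← Set.image_comp, heq]

theorem eq_of_image_eq [WellFoundedLT ι] (h : IsLevelCover p q) {τ τ' : Equiv.Perm E}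
    (hp : StrictMono (τ ∘ p)) (hq : StrictMono (τ ∘ q)) (hp' : StrictMono (τ' ∘ p))
    (hq' : StrictMono (τ' ∘ q))
    (heq : τ ∘ p '' {j | p j ≠ q j} = τ' ∘ p '' {j | p j ≠ q j}) : τ = τ' := by
  have hcomp_q : τ ∘ q = τ' ∘ q := h.comp_right_eq hq hq' heq
  have hcomp_p : τ ∘ p = τ' ∘ p := by
    refine h.symm.comp_right_eq hp hp' ?_
    rw [hcomp_q]
  ext e
  obtain ⟨i, rfl⟩ | ⟨i, rfl⟩ := h.exhausts e
  exacts [congrFun hcomp_p i, congrFun hcomp_q i]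

open Classical in
theorem card_strictMono_le [Fintype ι] [Fintype E] (h : IsLevelCover p q) :
    #{τ : Equiv.Perm E | StrictMono (τ ∘ p) ∧ StrictMono (τ ∘ q)}
      ≤ (2 * #{j | p j ≠ q j}).choose #{j | p j ≠ q j} := by
  set N : Finset ι := {j | p j ≠ q j} with hN
  obtain hempty | ⟨τ₀, hτ₀⟩ := eq_empty_or_nonempty
    ({τ : Equiv.Perm E | StrictMono (τ ∘ p) ∧ StrictMono (τ ∘ q)} : Finset _)
  · simp [hempty]
  rw [mem_filter_univ] at hτ₀
  have hfree : #(Nᶜ.image (τ₀ ∘ p))ᶜ = 2 * #N := by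
    have hcardE : Fintype.card E = Fintype.card ι + #N := by convert h.card_eq
    have hcardN := card_le_univ N
    rw [card_compl, card_image_of_injective _ hτ₀.1.injective, card_compl]
    omega
  rw [← hfree, ← card_powersetCard]
  refine card_le_card_of_injOn (fun τ ↦ N.image (τ ∘ p)) (fun τ hτ ↦ ?_) fun τ hτ τ' hτ' heq ↦ ?_
  · rw [mem_coe, mem_filter_univ] at hτ
    have hshared : Nᶜ.image (τ₀ ∘ p) = Nᶜ.image (τ ∘ p) := image_congr fun j hj ↦
      h.apply_eq_apply hτ₀.1 hτ₀.2 hτ.1 hτ.2 (by simpa [hN] using hj)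
    rw [mem_coe, mem_powersetCard, hshared, card_image_of_injective _ hτ.1.injective,
      subset_compl_iff_disjoint_right, disjoint_image hτ.1.injective]
    exact ⟨disjoint_compl_right, rfl⟩
  · rw [mem_coe, mem_filter_univ] at hτ hτ'
    refine h.eq_of_image_eq hτ.1 hτ.2 hτ'.1 hτ'.2 ?_
    simpa [hN, ← coe_inj] using heq

end IsLevelCover

end MonotonePerms

section PairProbability

variable {ι α : Type*}

theorem measurableSet_strictMono_comp [Preorder ι] [Countable ι] (p : ι → α) :
    MeasurableSet {ω : α → ℝ | StrictMono (ω ∘ p)} := by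
  simp only [StrictMono, Set.ofPred_forall]
  exact .iInter fun i ↦ .iInter fun j ↦ .iInter fun _ ↦
    measurableSet_lt (measurable_pi_apply _) (measurable_pi_apply _)

theorem isLevelCover_rangeFactorization {p q : ι → α} (hp : Function.Injective p)
    (hq : Function.Injective q) (hpq : ∀ i j, p i = q j → i = j) :
    IsLevelCover (E := ↥(Set.range p ∪ Set.range q)) (fun i ↦ ⟨p i, .inl ⟨i, rfl⟩⟩)
      (fun i ↦ ⟨q i, .inr ⟨i, rfl⟩⟩) where
  left_injective i j h := hp (Subtype.ext_iff.1 h)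
  right_injective i j h := hq (Subtype.ext_iff.1 h)
  index_eq i j h := hpq i j (Subtype.ext_iff.1 h)
  exhausts := by
    rintro ⟨_, ⟨i, rfl⟩ | ⟨i, rfl⟩⟩
    exacts [.inl ⟨i, rfl⟩, .inr ⟨i, rfl⟩]

theorem factorial_mul_measure_strictMono_le [LinearOrder ι] [Fintype ι] [Fintype α] [DecidableEq α]
    (μ : Measure ℝ) [IsProbabilityMeasure μ] [NullSingletonClass μ] {p q : ι → α}
    (hp : Function.Injective p) (hq : Function.Injective q) (hpq : ∀ i j, p i = q j → i = j) :
    ((Fintype.card ι + #{j | p j ≠ q j})! : ℝ≥0∞) *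
        Measure.pi (fun _ ↦ μ) {ω : α → ℝ | StrictMono (ω ∘ p) ∧ StrictMono (ω ∘ q)}
      ≤ (2 * #{j | p j ≠ q j}).choose #{j | p j ≠ q j} := by
  classical
  have hcover := isLevelCover_rangeFactorization hp hq hpq
  have hcard : Fintype.card (Equiv.Perm ↥(Set.range p ∪ Set.range q)) =
      (Fintype.card ι + #{j | p j ≠ q j})! := by
    rw [Fintype.card_perm, hcover.card_eq]
    simp_rw [ne_eq, Subtype.ext_iff]
  rw [← hcard]
  refine card_mul_measure_le _ (T := fun τ ω ↦ ω ∘ Equiv.Perm.ofSubtype τ)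
    (fun τ ↦ measurePreserving_comp_perm μ _)
    ((measurableSet_strictMono_comp p).inter (measurableSet_strictMono_comp q))
    ((ae_pi_injective μ).mono fun ω hω ↦ ?_)
  let : LinearOrder ↥(Set.range p ∪ Set.range q) :=
    LinearOrder.lift' (fun e ↦ ω e) (hω.comp Subtype.val_injective)
  have hcount := hcover.card_strictMono_le
  simp_rw [ne_eq, Subtype.ext_iff] at hcount
  refine le_of_eq_of_le ?_ (hcount.trans_eq (by congr!))
  congr! with τ
  have strictMono_iff (r : ι → ↥(Set.range p ∪ Set.range q)) :
      StrictMono ((ω ∘ Equiv.Perm.ofSubtype τ) ∘ (↑) ∘ r) ↔ StrictMono (τ ∘ r) := by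
    have hcomp : (ω ∘ Equiv.Perm.ofSubtype τ) ∘ (↑) ∘ r = fun i ↦ ω (τ (r i)) :=
      funext fun i ↦ congrArg ω (Equiv.Perm.ofSubtype_apply_coe τ (r i))
    rw [hcomp]
    rfl
  exact and_congr (strictMono_iff fun i ↦ ⟨p i, .inl ⟨i, rfl⟩⟩)
    (strictMono_iff fun i ↦ ⟨q i, .inr ⟨i, rfl⟩⟩)

theorem card_initSeg {n : ℕ} (σ : Equiv.Perm (Fin n)) (j : Fin n) : #(initSeg n σ j) = j := by
  rw [initSeg, card_image_of_injective _ σ.injective, filter_gt_eq_Iio, Fin.card_Iio]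

theorem eq_of_pathEdge_eq {n : ℕ} {σ σ' : Equiv.Perm (Fin n)} {i j : Fin n}
    (h : pathEdge n σ i = pathEdge n σ' j) : i = j := by
  have hcard := congrArg (fun e ↦ #e.1) h
  simpa only [pathEdge, card_initSeg, Fin.val_inj] using hcard

theorem pathEdge_injective {n : ℕ} (σ : Equiv.Perm (Fin n)) : Function.Injective (pathEdge n σ) :=
  fun _ _ ↦ eq_of_pathEdge_eq

theorem pairProb_le {n : ℕ} (σ σ' : Equiv.Perm (Fin n)) :
    pairProb n σ σ' ≤ ((2 * (n - #(sharedSteps n σ σ'))).choose (n - #(sharedSteps n σ σ')) : ℝ) /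
      (2 * n - #(sharedSteps n σ σ'))! := by
  have : IsProbabilityMeasure (volume.restrict (Set.Icc (0 : ℝ) 1)) := ⟨by simp⟩
  have hfree : #{j | pathEdge n σ j ≠ pathEdge n σ' j} = n - #(sharedSteps n σ σ') := by
    rw [← compl_filter, card_compl, Fintype.card_fin, sharedSteps]
  have hshared : #(sharedSteps n σ σ') ≤ n := by simpa using card_le_univ (sharedSteps n σ σ')
  have hbound := factorial_mul_measure_strictMono_le (volume.restrict (Set.Icc (0 : ℝ) 1))
    (pathEdge_injective σ) (pathEdge_injective σ') (fun _ _ ↦ eq_of_pathEdge_eq)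
  rw [Fintype.card_fin, hfree, ← Nat.add_sub_assoc hshared, ← two_mul] at hbound
  rw [le_div_iff₀ (by positivity), mul_comm]
  have hreal := ENNReal.toReal_mono (ENNReal.natCast_ne_top _) hbound
  rwa [ENNReal.toReal_mul, ENNReal.toReal_natCast, ENNReal.toReal_natCast] at hreal

end PairProbability

section GapLists

/-- The gap vector of the levels `l` of the shared edges, counted from level `a` instead of from
level `0`. -/
def gapsFrom (n a : ℕ) (l : List ℕ) : List ℕ :=
  List.zipWith (fun a b ↦ b - a) (a :: l.map (· + 1)) (l ++ [n])

theorem gapsFrom_cons (n a x : ℕ) (l : List ℕ) :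
    gapsFrom n a (x :: l) = (x - a) :: gapsFrom n (x + 1) l := rfl

theorem length_gapsFrom (n a : ℕ) (l : List ℕ) : (gapsFrom n a l).length = l.length + 1 := by
  simp [gapsFrom]

theorem eq_of_gapsFrom_eq {n a : ℕ} {l l' : List ℕ} (hl : l.Pairwise (· < ·))
    (hl' : l'.Pairwise (· < ·)) (ha : ∀ x ∈ l, a ≤ x) (ha' : ∀ x ∈ l', a ≤ x)
    (h : gapsFrom n a l = gapsFrom n a l') : l = l' := by
  have hlength : l.length = l'.length := by simpa [length_gapsFrom] using congrArg List.length h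
  induction l generalizing a l' with
  | nil => exact (List.eq_nil_of_length_eq_zero hlength.symm).symm
  | cons x l ih =>
    obtain ⟨y, l', rfl⟩ := List.exists_cons_of_length_eq_add_one hlength.symm
    rw [gapsFrom_cons, gapsFrom_cons, List.cons.injEq] at h
    rw [List.pairwise_cons] at hl hl'
    have hx := ha x List.mem_cons_self
    have hy := ha' y List.mem_cons_self
    obtain rfl : x = y := by omega
    rw [ih hl.2 hl'.2 hl.1 hl'.1 h.2 (Nat.succ_injective hlength)]

theorem filter_gap_zero {n a x : ℕ} {l : List ℕ} (hl : (x :: l).Pairwise (· < ·)) (hx : x < n) :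
    {j ∈ Ico a n | j ∉ x :: l ∧ (x :: l).countP (· < j) = 0} = Ico a x := by
  have hlt := (List.pairwise_cons.1 hl).1
  ext j
  simp only [mem_filter, mem_Ico, List.countP_eq_zero, decide_eq_true_eq, List.mem_cons,
    forall_eq_or_imp, not_or]
  constructor
  · intro h
    omega
  · intro h
    refine ⟨by omega, ⟨by omega, fun hj ↦ ?_⟩, by omega, fun y hy ↦ ?_⟩
    · have := hlt j hj
      omega
    · have := hlt y hy
      omega

theorem filter_gap_succ {n a x : ℕ} {l : List ℕ} (hl : (x :: l).Pairwise (· < ·)) (hx : a ≤ x)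
    (i : ℕ) :
    {j ∈ Ico a n | j ∉ x :: l ∧ (x :: l).countP (· < j) = i + 1} =
      {j ∈ Ico (x + 1) n | j ∉ l ∧ l.countP (· < j) = i} := by
  have hzero (j : ℕ) (hj : j ≤ x) : l.countP (· < j) = 0 := by
    refine List.countP_eq_zero.2 fun y hy ↦ ?_
    have := (List.pairwise_cons.1 hl).1 y hy
    simp only [decide_eq_true_eq]
    omega
  ext j
  simp only [mem_filter, mem_Ico, List.mem_cons, not_or, List.countP_cons, decide_eq_true_eq]
  rcases le_or_gt j x with hj | hj
  · simp only [hzero j hj, hj.not_gt, if_false]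
    exact iff_of_false (by omega) (by omega)
  · simp only [hj, if_true]
    grind

theorem gapsFrom_eq_map {n a : ℕ} {l : List ℕ} (hl : l.Pairwise (· < ·))
    (hbounds : ∀ x ∈ l, a ≤ x ∧ x < n) :
    gapsFrom n a l = (List.range (l.length + 1)).map
      fun i ↦ #{j ∈ Ico a n | j ∉ l ∧ l.countP (· < j) = i} := by
  induction l generalizing a with
  | nil => simp [gapsFrom]
  | cons x l ih =>
    obtain ⟨hx, hxn⟩ := hbounds x List.mem_cons_self
    have hlt := List.pairwise_cons.1 hl
    have htail := ih (a := x + 1) hlt.2 fun y hy ↦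
      ⟨hlt.1 y hy, (hbounds y (List.mem_cons_of_mem x hy)).2⟩
    rw [gapsFrom_cons, htail, List.length_cons, List.range_succ_eq_map (n := l.length + 1),
      List.map_cons, filter_gap_zero hl hxn, Nat.card_Ico, List.map_map]
    congr 1
    refine List.map_congr_left fun i _ ↦ ?_
    rw [Function.comp_apply, filter_gap_succ hl hx]

end GapLists

section GapSizes

variable {n : ℕ} (S : Finset (Fin n))

/-- The position, in the gap vector of the set `S` of shared steps, of the gap to which an unshared
step `j` belongs. -/
def gapIndex (j : Fin n) : ℕ := #{x ∈ S | x < j}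

/-- The `i`-th entry of the gap vector of the set `S` of shared steps (`0` for `i > #S`). -/
def gapSize (i : ℕ) : ℕ := #{j | j ∉ S ∧ gapIndex S j = i}

theorem gapIndex_lt (j : Fin n) : gapIndex S j < #S + 1 :=
  Nat.lt_succ_of_le (card_filter_le _ _)

theorem gapIndex_mono : Monotone (gapIndex S) := fun _ _ hjk ↦
  card_le_card <| monotone_filter_right S fun _ _ hx ↦ hx.trans_le hjk

variable {S} in
theorem gapIndex_lt_gapIndex {j k : Fin n} (hj : j ∈ S) (hjk : j < k) :
    gapIndex S j < gapIndex S k :=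
  card_lt_card <| (ssubset_iff_of_subset
    (monotone_filter_right S fun _ _ hx ↦ hx.trans hjk)).2 ⟨j, by simp [hj, hjk]⟩

theorem gapIndex_injOn : Set.InjOn (gapIndex S) S :=
  StrictMonoOn.injOn fun _ hj _ _ hjk ↦ gapIndex_lt_gapIndex hj hjk

theorem sum_gapSize : ∑ i ∈ range (#S + 1), gapSize S i = n - #S := by
  have hfibers := card_eq_sum_card_fiberwise (s := Sᶜ) (t := range (#S + 1)) (f := gapIndex S)
    fun j _ ↦ by simpa using gapIndex_lt S j
  rw [card_compl, Fintype.card_fin] at hfibers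
  rw [hfibers]
  refine sum_congr rfl fun i _ ↦ congrArg card ?_
  ext j
  simp

/-- The elements of `S` in increasing order, as natural numbers. -/
def sortedVals : List ℕ := (S.sort (· ≤ ·)).map Fin.val

theorem gapVector_eq_gapsFrom (σ σ' : Equiv.Perm (Fin n)) :
    gapVector n σ σ' = gapsFrom n 0 (sortedVals (sharedSteps n σ σ')) := rfl

theorem pairwise_lt_sortedVals : (sortedVals S).Pairwise (· < ·) :=
  List.pairwise_map.2 (sortedLT_sort S).pairwise

variable {S} in
theorem val_mem_sortedVals {j : Fin n} : (j : ℕ) ∈ sortedVals S ↔ j ∈ S := by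
  simp [sortedVals, Fin.val_inj]

theorem length_sortedVals : (sortedVals S).length = #S := by
  simp [sortedVals]

theorem countP_sortedVals (j : Fin n) :
    (sortedVals S).countP (· < (j : ℕ)) = gapIndex S j := by
  rw [sortedVals, List.countP_map, List.countP_eq_length_filter, gapIndex,
    ← List.toFinset_card_of_nodup ((sort_nodup S _).filter _), List.toFinset_filter,
    sort_toFinset]
  simp

theorem gapsFrom_sortedVals :
    gapsFrom n 0 (sortedVals S) = (List.range (#S + 1)).map (gapSize S) := by
  rw [gapsFrom_eq_map (pairwise_lt_sortedVals S) ?_, length_sortedVals]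
  · refine List.map_congr_left fun i _ ↦ ?_
    rw [gapSize, ← range_eq_Ico, card_filter, card_filter, sum_range]
    simp_rw [val_mem_sortedVals, countP_sortedVals]
  · intro x hx
    obtain ⟨j, -, rfl⟩ := List.mem_map.1 hx
    exact ⟨Nat.zero_le _, j.2⟩

variable {S} in
theorem eq_of_gapSize_eq {S' : Finset (Fin n)} (hcard : #S = #S')
    (h : ∀ i < #S + 1, gapSize S i = gapSize S' i) : S = S' := by
  have hgaps : gapsFrom n 0 (sortedVals S) = gapsFrom n 0 (sortedVals S') := by
    rw [gapsFrom_sortedVals, gapsFrom_sortedVals, ← hcard]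
    exact List.map_congr_left fun i hi ↦ h i (List.mem_range.1 hi)
  have hvals := eq_of_gapsFrom_eq (pairwise_lt_sortedVals S) (pairwise_lt_sortedVals S')
    (by simp) (by simp) hgaps
  ext j
  rw [← val_mem_sortedVals, hvals, val_mem_sortedVals]

theorem numGaps_eq (σ σ' : Equiv.Perm (Fin n)) :
    numGaps n σ σ' = #{i ∈ range (#(sharedSteps n σ σ') + 1) |
      gapSize (sharedSteps n σ σ') i ≠ 0} := by
  rw [numGaps, gapVector_eq_gapsFrom, gapsFrom_sortedVals, List.filter_map, List.length_map,
    ← List.toFinset_card_of_nodup (List.nodup_range.filter _), List.toFinset_filter,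
    List.toFinset_range]
  simp

end GapSizes

section SharedSteps

variable {n : ℕ}

theorem sharedSteps_mul_left (σ ρ : Equiv.Perm (Fin n)) :
    sharedSteps n σ (σ * ρ) = sharedSteps n 1 ρ := by
  have hseg (ρ : Equiv.Perm (Fin n)) (j : Fin n) :
      initSeg n (σ * ρ) j = (initSeg n ρ j).image σ := by
    simp [initSeg, image_image]
  have hedge (ρ : Equiv.Perm (Fin n)) (j : Fin n) :
      pathEdge n (σ * ρ) j = Prod.map (image σ) σ (pathEdge n ρ j) :=
    Prod.ext (hseg ρ j) rfl
  have hinj : Function.Injective (Prod.map (image σ) σ) :=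
    (image_injective σ.injective).prodMap σ.injective
  ext j
  have hiff := hinj.eq_iff (a := pathEdge n 1 j) (b := pathEdge n ρ j)
  rw [← hedge, ← hedge, mul_one] at hiff
  rwa [sharedSteps, sharedSteps, mem_filter_univ, mem_filter_univ]

theorem mem_sharedSteps_one_iff {ρ : Equiv.Perm (Fin n)} {x : Fin n} :
    x ∈ sharedSteps n 1 ρ ↔ ρ x = x ∧ ∀ j, ρ j < x ↔ j < x := by
  have hseg : initSeg n 1 x = initSeg n ρ x ↔ ∀ j, ρ j < x ↔ j < x := by
    rw [Finset.ext_iff, ← ρ.forall_congr_right]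
    simp [initSeg]
  rw [sharedSteps, mem_filter_univ, pathEdge, pathEdge, Prod.mk.injEq, hseg, and_comm,
    Equiv.Perm.one_apply, eq_comm]

variable (ρ : Equiv.Perm (Fin n))

theorem apply_mem_sharedSteps_one_iff {j : Fin n} :
    ρ j ∈ sharedSteps n 1 ρ ↔ j ∈ sharedSteps n 1 ρ := by
  refine ⟨fun h ↦ ?_, fun h ↦ ?_⟩
  · rwa [ρ.injective (mem_sharedSteps_one_iff.1 h).1] at h
  · rwa [(mem_sharedSteps_one_iff.1 h).1]

theorem gapIndex_apply (j : Fin n) :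
    gapIndex (sharedSteps n 1 ρ) (ρ j) = gapIndex (sharedSteps n 1 ρ) j := by
  refine congrArg card <| filter_congr fun x hx ↦ ?_
  obtain ⟨hfix, hlt⟩ := mem_sharedSteps_one_iff.1 hx
  have heq : ρ j = x ↔ j = x := by rw [← ρ.injective.eq_iff (a := j), hfix]
  rw [← not_iff_not, not_lt, not_lt, le_iff_lt_or_eq, le_iff_lt_or_eq, hlt, heq]

/- A gap consisting of a single step `j` would make `ρ` fix `j` and preserve the steps below `j`,
so that `j` would be shared. -/
theorem gapSize_sharedSteps_one_ne_one (i : ℕ) : gapSize (sharedSteps n 1 ρ) i ≠ 1 := by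
  intro hone
  set S := sharedSteps n 1 ρ
  obtain ⟨j, hj⟩ := card_eq_one.1 hone
  have hgap (x : Fin n) : x ∉ S ∧ gapIndex S x = i ↔ x = j := by
    rw [← mem_singleton (a := j), ← hj, mem_filter_univ]
  obtain ⟨hjS, hji⟩ := (hgap j).2 rfl
  have hfix : ρ j = j := (hgap (ρ j)).1
    ⟨mt (apply_mem_sharedSteps_one_iff ρ).1 hjS, (gapIndex_apply ρ j).trans hji⟩
  have hlt (y : Fin n) : y < j ↔ gapIndex S y < gapIndex S j := by
    refine ⟨fun hyj ↦ ?_, (gapIndex_mono S).reflect_lt⟩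
    by_cases hy : y ∈ S
    · exact gapIndex_lt_gapIndex hy hyj
    · exact (gapIndex_mono S hyj.le).lt_of_ne fun h ↦ hyj.ne ((hgap y).1 ⟨hy, h.trans hji⟩)
  refine hjS (mem_sharedSteps_one_iff.2 ⟨hfix, fun y ↦ ?_⟩)
  rw [hlt, hlt, gapIndex_apply]

/- A permutation with set `S` of shared steps permutes each gap of `S`. -/
theorem card_sharedSteps_one_eq_le (S : Finset (Fin n)) :
    #{ρ | sharedSteps n 1 ρ = S} ≤ ∏ i ∈ range (#S + 1), (gapSize S i)! := by
  let gapClass (j : Fin n) : Fin (#S + 1) × Bool :=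
    (⟨gapIndex S j, gapIndex_lt S j⟩, decide (j ∈ S))
  have hgap (i : Fin (#S + 1)) : Fintype.card {j // gapClass j = (i, false)} = gapSize S i := by
    rw [Fintype.card_subtype, gapSize]
    congr! 2 with j
    simp [gapClass, Fin.ext_iff, and_comm]
  have hshared (i : Fin (#S + 1)) : Fintype.card {j // gapClass j = (i, true)} ≤ 1 := by
    refine Fintype.card_le_one_iff.2 fun ⟨j, hj⟩ ⟨k, hk⟩ ↦ Subtype.ext ?_
    simp only [gapClass, Prod.mk.injEq, Fin.ext_iff, decide_eq_true_eq] at hj hk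
    exact gapIndex_injOn S hj.2 hk.2 (hj.1.trans hk.1.symm)
  calc #{ρ | sharedSteps n 1 ρ = S}
      ≤ Fintype.card {ρ : Equiv.Perm (Fin n) // gapClass ∘ ρ = gapClass} := by
        rw [Fintype.card_subtype]
        refine card_le_card (monotone_filter_right _ fun ρ _ hρ ↦ ?_)
        subst hρ
        funext j
        simp [gapClass, gapIndex_apply, apply_mem_sharedSteps_one_iff]
    _ = ∏ i ∈ range (#S + 1), (gapSize S i)! := by
        simp_rw [DomMulAct.stabilizer_card, Fintype.prod_prod_type, Fintype.prod_bool, hgap,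
          Nat.factorial_eq_one.2 (hshared _), one_mul, prod_range]

end SharedSteps

section GapProfiles

theorem factorial_add_two_mul_le (a b : ℕ) : (a + 2)! * (b + 2)! ≤ 2 * (a + b + 2)! := by
  induction a with
  | zero => simp
  | succ a ih =>
    calc (a + 1 + 2)! * (b + 2)! = (a + 3) * ((a + 2)! * (b + 2)!) := by
          rw [Nat.factorial_succ (a + 2), mul_assoc]
      _ ≤ (a + b + 3) * (2 * (a + b + 2)!) := Nat.mul_le_mul (by omega) ih
      _ = 2 * (a + 1 + b + 2)! := by
          rw [show a + 1 + b + 2 = a + b + 2 + 1 by ring, Nat.factorial_succ (a + b + 2)]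
          ring

theorem two_mul_prod_factorial_add_two_le {ι : Type*} (s : Finset ι) (k : ι → ℕ) :
    2 * ∏ i ∈ s, (k i + 2)! ≤ 2 ^ #s * (∑ i ∈ s, k i + 2)! := by
  induction s using Finset.cons_induction with
  | empty => simp
  | cons a s ha ih =>
    rw [prod_cons, sum_cons, card_cons, pow_succ]
    calc 2 * ((k a + 2)! * ∏ i ∈ s, (k i + 2)!) = (k a + 2)! * (2 * ∏ i ∈ s, (k i + 2)!) := by ring
      _ ≤ (k a + 2)! * (2 ^ #s * (∑ i ∈ s, k i + 2)!) := by gcongr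
      _ = 2 ^ #s * ((k a + 2)! * (∑ i ∈ s, k i + 2)!) := by ring
      _ ≤ 2 ^ #s * (2 * (k a + ∑ i ∈ s, k i + 2)!) :=
          Nat.mul_le_mul_left _ (factorial_add_two_mul_le _ _)
      _ = 2 ^ #s * 2 * (k a + ∑ i ∈ s, k i + 2)! := by ring

variable {ι : Type*} [Fintype ι] {k : ι → ℕ} {g t : ℕ}

/-- The shape of a gap vector: `g` nonzero entries, each at least `2`, whose excesses over `2` add
up to `t`. -/
structure IsGapProfile (k : ι → ℕ) (g t : ℕ) : Prop where
  ne_one : ∀ i, k i ≠ 1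
  card_support : #{i | k i ≠ 0} = g
  sum_eq : ∑ i, k i = t + 2 * g

namespace IsGapProfile

theorem sub_add_cancel (h : IsGapProfile k g t) {i : ι} (hi : k i ≠ 0) : k i - 2 + 2 = k i := by
  have := h.ne_one i
  omega

theorem sum_sub_two (h : IsGapProfile k g t) : ∑ i with k i ≠ 0, (k i - 2) = t := by
  have hsum : ∑ i with k i ≠ 0, (k i - 2 + 2) = t + 2 * g := by
    rw [← h.sum_eq, ← sum_filter_ne_zero (s := univ) (f := k)]
    exact sum_congr rfl fun i hi ↦ h.sub_add_cancel (mem_filter.1 hi).2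
  rw [sum_add_distrib, sum_const, h.card_support, smul_eq_mul] at hsum
  omega

theorem two_mul_prod_factorial_le (h : IsGapProfile k g t) :
    2 * ∏ i, (k i)! ≤ 2 ^ g * (t + 2)! := by
  have hprod : ∏ i with k i ≠ 0, (k i - 2 + 2)! = ∏ i, (k i)! :=
    calc ∏ i with k i ≠ 0, (k i - 2 + 2)! = ∏ i with k i ≠ 0, (k i)! :=
          prod_congr rfl fun i hi ↦ by rw [h.sub_add_cancel (mem_filter.1 hi).2]
      _ = ∏ i, (k i)! := prod_filter_of_ne fun i _ hi h0 ↦ hi (by rw [h0, Nat.factorial_zero])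
  rw [← hprod, ← h.card_support]
  exact (two_mul_prod_factorial_add_two_le _ _).trans_eq (by rw [h.sum_sub_two])

end IsGapProfile

theorem card_gapProfiles_le {P : Finset (ι → ℕ)} (hP : ∀ k ∈ P, IsGapProfile k g t) :
    #P ≤ (Fintype.card ι).choose g * g.multichoose t := by
  classical
  let shape (k : ι → ℕ) : Σ _ : Finset ι, ι →₀ ℕ :=
    ⟨({i | k i ≠ 0} : Finset ι), Finsupp.equivFunOnFinite.symm fun i ↦ k i - 2⟩
  have hmaps (k : ι → ℕ) (hk : k ∈ P) :
      shape k ∈ (powersetCard g univ).sigma fun Z ↦ finsuppAntidiag Z t := by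
    simp only [shape, mem_sigma, mem_powersetCard_univ, mem_finsuppAntidiag]
    refine ⟨(hP k hk).card_support, (hP k hk).sum_sub_two, fun i hi ↦ ?_⟩
    have hpos : k i - 2 ≠ 0 := Finsupp.mem_support_iff.1 hi
    rw [mem_filter_univ]
    omega
  have hinj : Set.InjOn shape P := by
    intro k hk k' hk' heq
    simp only [shape, Sigma.mk.injEq, heq_eq_eq, EmbeddingLike.apply_eq_iff_eq] at heq
    funext i
    have hsupp : k i ≠ 0 ↔ k' i ≠ 0 := by simpa using Finset.ext_iff.1 heq.1 i
    have hsub : k i - 2 = k' i - 2 := congrFun heq.2 i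
    have hk_ne := (hP k hk).ne_one i
    have hk'_ne := (hP k' hk').ne_one i
    omega
  refine (card_le_card_of_injOn shape hmaps hinj).trans_eq ?_
  rw [card_sigma, sum_congr rfl fun Z hZ ↦ by
    rw [card_finsuppAntidiag_nat_eq_multichoose, (mem_powersetCard.1 hZ).2], sum_const,
    card_powersetCard, card_univ, smul_eq_mul]

end GapProfiles

section RelativePaths

variable {n s g t : ℕ}

/-- The direct paths, as permutations, that share exactly `s` edges with `g` gaps with the path of
the identity permutation. -/
def relativePaths (n s g : ℕ) : Finset (Equiv.Perm (Fin n)) :=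
  {ρ | #(sharedSteps n 1 ρ) = s ∧ numGaps n 1 ρ = g}

theorem numGaps_mul_left (σ ρ : Equiv.Perm (Fin n)) : numGaps n σ (σ * ρ) = numGaps n 1 ρ := by
  rw [numGaps, gapVector, sharedSteps_mul_left, numGaps, gapVector]

theorem card_pairs_eq (n s g : ℕ) :
    #{p : Equiv.Perm (Fin n) × Equiv.Perm (Fin n) |
      #(sharedSteps n p.1 p.2) = s ∧ numGaps n p.1 p.2 = g} = n ! * #(relativePaths n s g) := by
  calc _ = #((univ : Finset (Equiv.Perm (Fin n))) ×ˢ relativePaths n s g) := by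
        refine card_equiv (Equiv.prodShear (.refl _) fun σ ↦ Equiv.mulLeft σ⁻¹) fun ⟨σ, σ'⟩ ↦ ?_
        have hshared := sharedSteps_mul_left σ (σ⁻¹ * σ')
        have hgaps := numGaps_mul_left σ (σ⁻¹ * σ')
        rw [mul_inv_cancel_left] at hshared hgaps
        simp [relativePaths, hshared, hgaps]
    _ = n ! * #(relativePaths n s g) := by
        rw [card_product, card_univ, Fintype.card_perm, Fintype.card_fin]

theorem c_le_choose_div_choose_mul (hs : s ≤ n) :
    c n s g ≤ ((2 * (n - s)).choose (n - s) : ℝ) / (2 * n - s).choose n *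
      (#(relativePaths n s g) / (n - s)!) := by
  have hfact : ((2 * n - s)! : ℝ) = (2 * n - s).choose n * (n - s)! * n ! := by
    rw [show 2 * n - s = n - s + n by omega]
    exact_mod_cast (Nat.add_choose_mul_factorial_mul_factorial (n - s) n).symm
  have hchoose : 0 < (2 * n - s).choose n := Nat.choose_pos (by omega)
  calc c n s g ≤ (n ! * #(relativePaths n s g) : ℕ) *
          (((2 * (n - s)).choose (n - s) : ℝ) / (2 * n - s)!) := by
        rw [← card_pairs_eq, ← nsmul_eq_mul]
        refine sum_le_card_nsmul _ _ _ fun p hp ↦ ?_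
        rw [← (mem_filter.1 hp).2.1]
        exact pairProb_le p.1 p.2
    _ = ((2 * (n - s)).choose (n - s) : ℝ) / (2 * n - s).choose n *
          (#(relativePaths n s g) / (n - s)!) := by
        rw [hfact, Nat.cast_mul]
        field_simp

theorem isGapProfile_gapSize {ρ : Equiv.Perm (Fin n)} (hn : n = s + t + 2 * g)
    (hρ : ρ ∈ relativePaths n s g) :
    IsGapProfile (fun i : Fin (s + 1) ↦ gapSize (sharedSteps n 1 ρ) i) g t := by
  obtain ⟨hs, hg⟩ := (mem_filter_univ _).1 hρ
  refine ⟨fun i ↦ gapSize_sharedSteps_one_ne_one ρ i, ?_, ?_⟩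
  · rw [← hg, numGaps_eq, hs, card_filter, card_filter, sum_range]
  · rw [Fin.sum_univ_eq_sum_range (gapSize (sharedSteps n 1 ρ)), ← hs, sum_gapSize]
    omega

theorem card_relativePaths_le (hn : n = s + t + 2 * (g + 1)) :
    #(relativePaths n s (g + 1)) ≤
      2 ^ g * (t + 2)! * ((s + 1).choose (g + 1) * (g + 1).multichoose t) := by
  let profile (ρ : Equiv.Perm (Fin n)) (i : Fin (s + 1)) : ℕ := gapSize (sharedSteps n 1 ρ) i
  have hprofiles : #((relativePaths n s (g + 1)).image profile) ≤
      (s + 1).choose (g + 1) * (g + 1).multichoose t := by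
    simpa only [Fintype.card_fin] using
      card_gapProfiles_le (forall_mem_image.2 fun ρ hρ ↦ isGapProfile_gapSize hn hρ)
  refine (card_le_mul_card_image _ _ (forall_mem_image.2 fun ρ₀ hρ₀ ↦ ?_)).trans
    (Nat.mul_le_mul_left _ hprofiles)
  have hs₀ : #(sharedSteps n 1 ρ₀) = s := ((mem_filter_univ _).1 hρ₀).1
  calc #{ρ ∈ relativePaths n s (g + 1) | profile ρ = profile ρ₀}
      ≤ #{ρ | sharedSteps n 1 ρ = sharedSteps n 1 ρ₀} := by
        refine card_le_card fun ρ hρ ↦ ?_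
        obtain ⟨hρ, heq⟩ := mem_filter.1 hρ
        have hs : #(sharedSteps n 1 ρ) = s := ((mem_filter_univ _).1 hρ).1
        exact (mem_filter_univ _).2 <| eq_of_gapSize_eq (hs.trans hs₀.symm) fun i hi ↦
          congrFun heq ⟨i, hs ▸ hi⟩
    _ ≤ ∏ i : Fin (s + 1), (profile ρ₀ i)! := by
        rw [Fin.prod_univ_eq_prod_range fun i ↦ (gapSize (sharedSteps n 1 ρ₀) i)!, ← hs₀]
        exact card_sharedSteps_one_eq_le _
    _ ≤ 2 ^ g * (t + 2)! := by
        have hprod := (isGapProfile_gapSize hn hρ₀).two_mul_prod_factorial_le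
        rw [pow_succ'] at hprod
        linarith

theorem factorial_mul_multichoose_mul_le (t g : ℕ) :
    (t + 2)! * (g + 1).multichoose t * (g ! * (t + g + 1) ^ g) ≤ (t + 2 * (g + 1))! := by
  have hchoose : t ! * (g + 1).multichoose t * g ! = (t + g)! := by
    rw [Nat.multichoose_eq, show g + 1 + t - 1 = t + g by omega, Nat.choose_symm_add,
      ← Nat.add_choose_mul_factorial_mul_factorial t g]
    ring
  calc (t + 2)! * (g + 1).multichoose t * (g ! * (t + g + 1) ^ g)
      = (t + 2) * (t + 1) * ((t + g)! * (t + g + 1) ^ g) := by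
        rw [← hchoose, Nat.factorial_succ (t + 1), Nat.factorial_succ t]
        ring
    _ ≤ (t + 2 * g + 2) * (t + 2 * g + 1) * (t + g + g)! := by
        gcongr
        · omega
        · omega
        · exact Nat.factorial_mul_pow_le_factorial
    _ = (t + 2 * (g + 1))! := by
        rw [show t + 2 * (g + 1) = t + g + g + 1 + 1 by ring, Nat.factorial_succ (t + g + g + 1),
          Nat.factorial_succ (t + g + g)]
        ring

theorem card_relativePaths_mul_le (hn : n = s + t + 2 * (g + 1)) :
    #(relativePaths n s (g + 1)) * (g ! * (n - s - (g + 1)) ^ g) ≤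
      2 ^ g * (s + 1).choose (g + 1) * (n - s)! := by
  rw [show n - s - (g + 1) = t + g + 1 by omega, show n - s = t + 2 * (g + 1) by omega]
  calc #(relativePaths n s (g + 1)) * (g ! * (t + g + 1) ^ g)
      ≤ 2 ^ g * (t + 2)! * ((s + 1).choose (g + 1) * (g + 1).multichoose t) *
          (g ! * (t + g + 1) ^ g) := Nat.mul_le_mul_right _ (card_relativePaths_le hn)
    _ = 2 ^ g * (s + 1).choose (g + 1) *
          ((t + 2)! * (g + 1).multichoose t * (g ! * (t + g + 1) ^ g)) := by ring
    _ ≤ 2 ^ g * (s + 1).choose (g + 1) * (t + 2 * (g + 1))! :=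
        Nat.mul_le_mul_left _ (factorial_mul_multichoose_mul_le t g)

theorem card_relativePaths_div_factorial_le (hn : n = s + t + 2 * (g + 1)) :
    (#(relativePaths n s (g + 1)) : ℝ) / (n - s)! ≤
      (s + 1).choose (g + 1) * 2 ^ g / (g ! * (n - s - (g + 1) : ℕ) ^ g) := by
  have hpos : 0 < n - s - (g + 1) := by omega
  rw [div_le_div_iff₀ (by positivity) (by positivity), mul_comm (_ : ℝ) (2 ^ g)]
  exact_mod_cast card_relativePaths_mul_le hn

end RelativePaths

end RandomHypercube

open RandomHypercube in
/-- Upper bound on the pair sum `c_{s,g}`. -/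
theorem c_le_bound (n s g : ℕ) (hn : 1 ≤ n) (hs : s ≤ n - 2)
    (hg1 : 1 ≤ g) (hg2 : g ≤ min (s + 1) ((n - s) / 2)) :
    c n s g
      ≤ (((2 * (n - s)).choose (n - s) : ℝ) / ((2 * n - s).choose n : ℝ))
        * ((s + 1).choose g : ℝ) * (2 : ℝ) ^ (g - 1)
        / (((g - 1).factorial : ℝ) * ((n - s - g : ℕ) : ℝ) ^ (g - 1)) := by
  obtain ⟨h, rfl⟩ := Nat.exists_eq_add_of_le' hg1
  have hsteps : n = s + (n - s - 2 * (h + 1)) + 2 * (h + 1) := by omega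
  calc c n s (h + 1)
      ≤ ((2 * (n - s)).choose (n - s) : ℝ) / (2 * n - s).choose n *
          ((relativePaths n s (h + 1)).card / (n - s).factorial) :=
        c_le_choose_div_choose_mul (by omega)
    _ ≤ ((2 * (n - s)).choose (n - s) : ℝ) / (2 * n - s).choose n *
          ((s + 1).choose (h + 1) * 2 ^ h / (h.factorial * (n - s - (h + 1) : ℕ) ^ h)) :=
        mul_le_mul_of_nonneg_left (card_relativePaths_div_factorial_le hsteps) (by positivity)
    _ = _ := by rw [Nat.add_sub_cancel, ← mul_div_assoc, ← mul_assoc]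
end

section
/- Define f : [0,1] → ℝ by f(x) = log((2−x)^{2−x} / (4(1−x))^{1−x}) for x ∈ [0,1), extended continuously by f(1) = 0. Then: (i) there exists a constant C > 0 such that for all integers n ≥ 2 and all 0 ≤ s ≤ n−1, C(2(n−s), n−s) / C(2n−s, n) ≤ C · e^{−n·f(s/n)}; (ii) f(0) = f(1) = 0; (iii) f is strictly increasing on [0, 2/3] and strictly decreasing on [2/3, 1]; and (iv) f(x) ≥ x/2 for all 0 ≤ x ≤ 1/3. -/
open Real

/-- The exponent function `f(x) = log((2-x)^(2-x) / (4(1-x))^(1-x))`.  (With the `rpow`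
convention `0 ^ 0 = 1`, this formula also yields the continuous extension `f 1 = 0`.) -/
noncomputable def gapExponent (x : ℝ) : ℝ :=
  Real.log ((2 - x) ^ (2 - x) / (4 * (1 - x)) ^ (1 - x))

/-! Write `h k = k! / (k / e) ^ k` and `x = 1 - m / n`. Expanding the binomial coefficients into
factorials, all powers cancel against `e ^ (-n f(x))`, and
`C(2m, m) / C(n + m, n) = e ^ (-n f(x)) * (h (2m) / h m) * (h n / h (n + m))`.
Since `h` is increasing while `h k / √k` is decreasing, the two quotients are at most `√2` and `1`.

The shape of `f` is read off from `f'(x) = log (4 (1 - x) / (2 - x))`: it decreases and changes sign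
at `2/3`. By concavity, the bound `x / 2 ≤ f x` follows from its two endpoints `0` and `1/3`. -/

section StirlingRatio

open scoped Nat

/-- The ratio of `k!` to the leading term `(k / e) ^ k` of Stirling's formula. Unlike Mathlib's
`Stirling.stirlingSeq`, it omits the factor `√(2k)`, so that it is `1` rather than junk at `0`. -/
noncomputable def stirlingRatio (k : ℕ) : ℝ :=
  k ! / (k / exp 1) ^ k

lemma natCast_pow_self_pos (k : ℕ) : (0 : ℝ) < (k : ℝ) ^ k := by
  exact_mod_cast Nat.pow_self_pos

lemma stirlingRatio_pos (k : ℕ) : 0 < stirlingRatio k := by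
  have := natCast_pow_self_pos k
  rw [stirlingRatio, div_pow]
  positivity

lemma factorial_eq_stirlingRatio_mul (k : ℕ) :
    (k ! : ℝ) = stirlingRatio k * k ^ k / exp 1 ^ k := by
  have := (natCast_pow_self_pos k).ne'
  rw [stirlingRatio, div_pow]
  field_simp

lemma add_one_pow_le_exp_one_mul_pow (k : ℕ) : ((k : ℝ) + 1) ^ k ≤ exp 1 * (k : ℝ) ^ k := by
  rcases eq_or_ne k 0 with rfl | hk
  · simp
  have hk' : (k : ℝ) ≠ 0 := mod_cast hk
  calc ((k : ℝ) + 1) ^ k = (1 + (k : ℝ)⁻¹) ^ k * (k : ℝ) ^ k := by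
        rw [← mul_pow, add_mul, one_mul, inv_mul_cancel₀ hk']
    _ ≤ exp 1 * (k : ℝ) ^ k := by
        gcongr; exact one_add_inv_pow_le_exp

lemma stirlingRatio_monotone : Monotone stirlingRatio := by
  refine monotone_nat_of_le_succ fun k ↦ ?_
  have hpow := natCast_pow_self_pos k
  calc stirlingRatio k = k ! * exp 1 ^ (k + 1) / (exp 1 * (k : ℝ) ^ k) := by
        rw [stirlingRatio, div_pow, pow_succ]; field_simp
    _ ≤ k ! * exp 1 ^ (k + 1) / ((k : ℝ) + 1) ^ k := by
        gcongr; exact add_one_pow_le_exp_one_mul_pow k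
    _ = stirlingRatio (k + 1) := by
        rw [stirlingRatio, div_pow, Nat.factorial_succ]
        push_cast
        rw [pow_succ ((k : ℝ) + 1)]
        field_simp

lemma stirlingRatio_eq_sqrt_mul_stirlingSeq {k : ℕ} (hk : k ≠ 0) :
    stirlingRatio k = √(2 * k) * Stirling.stirlingSeq k := by
  rw [stirlingRatio, Stirling.stirlingSeq]
  field_simp

lemma stirlingRatio_two_mul_le (m : ℕ) : stirlingRatio (2 * m) ≤ √2 * stirlingRatio m := by
  rcases m with - | m
  · simp [stirlingRatio]
  have hanti : Stirling.stirlingSeq (2 * (m + 1)) ≤ Stirling.stirlingSeq (m + 1) :=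
    Stirling.stirlingSeq'_antitone (show m ≤ 2 * m + 1 by lia)
  rw [stirlingRatio_eq_sqrt_mul_stirlingSeq (by lia),
    stirlingRatio_eq_sqrt_mul_stirlingSeq m.succ_ne_zero, ← mul_assoc, ← sqrt_mul zero_le_two]
  push_cast
  gcongr

lemma choose_div_choose_eq_stirlingRatio (n m : ℕ) :
    ((2 * m).choose m : ℝ) / ((n + m).choose n : ℝ) =
      4 ^ m * m ^ m * n ^ n / (n + m : ℝ) ^ (n + m) *
        (stirlingRatio (2 * m) / stirlingRatio m * (stirlingRatio n / stirlingRatio (n + m))) := by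
  have hn := (natCast_pow_self_pos n).ne'
  have hm := (natCast_pow_self_pos m).ne'
  have hnm : ((n : ℝ) + m) ^ (n + m) ≠ 0 := by exact_mod_cast (natCast_pow_self_pos (n + m)).ne'
  have hn' := (stirlingRatio_pos n).ne'
  have hm' := (stirlingRatio_pos m).ne'
  have hnm' := (stirlingRatio_pos (n + m)).ne'
  have htwo : ((2 * m : ℕ) : ℝ) ^ (2 * m) = 4 ^ m * m ^ m * m ^ m := by
    push_cast
    rw [mul_pow, pow_mul 2 2 m, two_mul m, pow_add]
    norm_num [mul_assoc]
  rw [two_mul m, Nat.cast_add_choose, Nat.cast_add_choose, ← two_mul]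
  simp only [factorial_eq_stirlingRatio_mul, htwo]
  push_cast
  field_simp
  ring

lemma choose_div_choose_le (n m : ℕ) :
    ((2 * m).choose m : ℝ) / ((n + m).choose n : ℝ) ≤
      √2 * (4 ^ m * m ^ m * n ^ n / (n + m : ℝ) ^ (n + m)) := by
  have htwo : stirlingRatio (2 * m) / stirlingRatio m ≤ √2 :=
    (div_le_iff₀ (stirlingRatio_pos m)).2 (stirlingRatio_two_mul_le m)
  have hmono : stirlingRatio n / stirlingRatio (n + m) ≤ 1 :=
    (div_le_one (stirlingRatio_pos _)).2 (stirlingRatio_monotone (Nat.le_add_right n m))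
  have hpos : 0 ≤ stirlingRatio n / stirlingRatio (n + m) :=
    (div_pos (stirlingRatio_pos _) (stirlingRatio_pos _)).le
  rw [choose_div_choose_eq_stirlingRatio, mul_comm √2]
  gcongr
  simpa only [mul_one] using mul_le_mul htwo hmono hpos (sqrt_nonneg 2)

end StirlingRatio

lemma gapExponent_zero : gapExponent 0 = 0 := by
  norm_num [gapExponent]

lemma gapExponent_one : gapExponent 1 = 0 := by
  norm_num [gapExponent]

lemma exp_gapExponent {x : ℝ} (hx : x ≤ 1) :
    exp (gapExponent x) = (2 - x) ^ (2 - x) / (4 * (1 - x)) ^ (1 - x) := by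
  refine exp_log (div_pos (rpow_pos_of_pos (by linarith) _) ?_)
  rcases hx.lt_or_eq with hx | rfl
  · exact rpow_pos_of_pos (by linarith) _
  · norm_num

lemma exp_neg_mul_gapExponent {n : ℕ} (hn : n ≠ 0) (m : ℕ) :
    exp (-n * gapExponent (1 - m / n)) = 4 ^ m * m ^ m * n ^ n / (n + m : ℝ) ^ (n + m) := by
  have hn' : (n : ℝ) ≠ 0 := mod_cast hn
  have hx : 1 - (m : ℝ) / n ≤ 1 := sub_le_self _ (by positivity)
  have hone : 1 - (1 - (m : ℝ) / n) = m / n := by ring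
  have htwo : 2 - (1 - (m : ℝ) / n) = (n + m) / n := by field_simp; ring
  have hnum : (((n : ℝ) + m) / n) ^ ((n + m : ℝ) / n * n) = ((n + m) / n) ^ (n + m) := by
    rw [div_mul_cancel₀ _ hn', ← Nat.cast_add, rpow_natCast]
  have hden : (4 * ((m : ℝ) / n)) ^ ((m : ℝ) / n * n) = (4 * (m / n)) ^ m := by
    rw [div_mul_cancel₀ _ hn', rpow_natCast]
  rw [neg_mul, exp_neg, mul_comm, exp_mul, exp_gapExponent hx, hone, htwo,
    div_rpow (by positivity) (by positivity), ← rpow_mul (by positivity),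
    ← rpow_mul (by positivity), hnum, hden, inv_div, mul_pow, div_pow, div_pow, pow_add (n : ℝ)]
  field_simp

theorem choose_div_choose_le_exp_gapExponent {n s : ℕ} (hn : n ≠ 0) (hs : s ≤ n) :
    ((2 * (n - s)).choose (n - s) : ℝ) / ((2 * n - s).choose n : ℝ) ≤
      √2 * exp (-n * gapExponent (s / n)) := by
  have hx : (s : ℝ) / n = 1 - (n - s : ℕ) / n := by
    rw [Nat.cast_sub hs]; field_simp; ring
  rw [hx, exp_neg_mul_gapExponent hn, show 2 * n - s = n + (n - s) by lia]
  exact choose_div_choose_le n (n - s)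

lemma gapExponent_eq {x : ℝ} (hx : x ≤ 1) :
    gapExponent x = (2 - x) * log (2 - x) - (1 - x) * log (4 * (1 - x)) := by
  rcases hx.lt_or_eq with hx | rfl
  · have hone : 0 < 4 * (1 - x) := by linarith
    have htwo : 0 < 2 - x := by linarith
    rw [gapExponent, log_div (rpow_pos_of_pos htwo _).ne' (rpow_pos_of_pos hone _).ne',
      log_rpow htwo, log_rpow hone]
  · norm_num [gapExponent]

lemma continuousOn_gapExponent : ContinuousOn gapExponent (Set.Iic 1) := by
  have hcont : Continuous fun x : ℝ ↦
      (2 - x) * log (2 - x) - 4⁻¹ * (4 * (1 - x) * log (4 * (1 - x))) :=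
    (continuous_mul_log.comp (continuous_const.sub continuous_id)).sub
      (continuous_const.mul (continuous_mul_log.comp
        (continuous_const.mul (continuous_const.sub continuous_id))))
  refine hcont.continuousOn.congr fun x hx ↦ ?_
  rw [gapExponent_eq hx]
  ring

lemma hasDerivAt_gapExponent {x : ℝ} (hx : x < 1) :
    HasDerivAt gapExponent (log (4 * (1 - x) / (2 - x))) x := by
  have hone : 1 - x ≠ 0 := by linarith
  have htwo : 2 - x ≠ 0 := by linarith
  have hsub (c : ℝ) : HasDerivAt (fun y ↦ c - y) (-1) x := (hasDerivAt_id x).const_sub c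
  have hlog := ((hsub 2).mul ((hsub 2).log htwo)).sub
    ((hsub 1).mul (((hsub 1).const_mul 4).log (mul_ne_zero four_ne_zero hone)))
  refine (hlog.congr_of_eventuallyEq ?_).congr_deriv ?_
  · filter_upwards [Iio_mem_nhds hx] with y hy using gapExponent_eq hy.le
  · rw [log_div (mul_ne_zero four_ne_zero hone) htwo]
    field_simp
    ring

lemma strictMonoOn_gapExponent : StrictMonoOn gapExponent (Set.Iic (2 / 3)) := by
  refine strictMonoOn_of_deriv_pos (convex_Iic _)
    (continuousOn_gapExponent.mono (Set.Iic_subset_Iic.2 (by norm_num))) fun x hx ↦ ?_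
  rw [interior_Iic, Set.mem_Iio] at hx
  rw [(hasDerivAt_gapExponent (by linarith)).deriv]
  exact log_pos ((one_lt_div (by linarith)).2 (by linarith))

lemma strictAntiOn_gapExponent : StrictAntiOn gapExponent (Set.Icc (2 / 3) 1) := by
  refine strictAntiOn_of_deriv_neg (convex_Icc _ _)
    (continuousOn_gapExponent.mono Set.Icc_subset_Iic_self) fun x hx ↦ ?_
  rw [interior_Icc, Set.mem_Ioo] at hx
  rw [(hasDerivAt_gapExponent hx.2).deriv]
  exact log_neg (div_pos (by linarith) (by linarith)) ((div_lt_one (by linarith)).2 (by linarith))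

lemma strictConcaveOn_gapExponent : StrictConcaveOn ℝ (Set.Iic 1) gapExponent := by
  refine StrictAntiOn.strictConcaveOn_of_deriv (convex_Iic _) continuousOn_gapExponent ?_
  rw [interior_Iic]
  intro x hx y hy hxy
  rw [Set.mem_Iio] at hx hy
  rw [(hasDerivAt_gapExponent hx).deriv, (hasDerivAt_gapExponent hy).deriv]
  refine log_lt_log (div_pos (by linarith) (by linarith)) ?_
  rw [div_lt_div_iff₀ (by linarith) (by linarith)]
  linarith

lemma one_sixth_le_gapExponent_one_third : 1 / 6 ≤ gapExponent (1 / 3) := by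
  have hlog : 6 * gapExponent (1 / 3) = log ((5 / 3) ^ 10 / (8 / 3) ^ 4) := by
    rw [gapExponent_eq (by norm_num), log_div (by norm_num) (by norm_num), log_pow, log_pow]
    norm_num
    ring
  have hexp : exp 1 ≤ (5 / 3) ^ 10 / (8 / 3) ^ 4 := exp_one_lt_d9.le.trans (by norm_num)
  have hone : 1 ≤ log ((5 / 3) ^ 10 / (8 / 3) ^ 4) :=
    (le_log_iff_exp_le (by norm_num)).2 hexp
  linarith

lemma half_le_gapExponent {x : ℝ} (hx : x ∈ Set.Icc (0 : ℝ) (1 / 3)) :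
    x / 2 ≤ gapExponent x := by
  have hchord : (1 - 3 * x) * gapExponent 0 + 3 * x * gapExponent (1 / 3) ≤
      gapExponent ((1 - 3 * x) * 0 + 3 * x * (1 / 3)) :=
    strictConcaveOn_gapExponent.concaveOn.2 (by norm_num) (by norm_num)
      (by linarith [hx.2]) (by linarith [hx.1]) (by ring)
  calc x / 2 = (1 - 3 * x) * gapExponent 0 + 3 * x * (1 / 6) := by
        rw [gapExponent_zero]; ring
    _ ≤ (1 - 3 * x) * gapExponent 0 + 3 * x * gapExponent (1 / 3) := by
        gcongr
        · linarith [hx.1]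
        · exact one_sixth_le_gapExponent_one_third
    _ ≤ gapExponent ((1 - 3 * x) * 0 + 3 * x * (1 / 3)) := hchord
    _ = gapExponent x := by congr 1; ring

/-- Properties of the exponent function `f` and the binomial-ratio bound:
(i) `C(2(n-s), n-s) / C(2n-s, n) ≤ C e^{-n f(s/n)}`; (ii) `f 0 = f 1 = 0`;
(iii) `f` is strictly increasing on `[0, 2/3]` and strictly decreasing on `[2/3, 1]`;
(iv) `f x ≥ x/2` on `[0, 1/3]`. -/
theorem gapExponent_properties :
    (∃ C : ℝ, 0 < C ∧ ∀ n : ℕ, 2 ≤ n → ∀ s : ℕ, s ≤ n - 1 →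
      ((2 * (n - s)).choose (n - s) : ℝ) / ((2 * n - s).choose n : ℝ)
        ≤ C * Real.exp (-(n : ℝ) * gapExponent ((s : ℝ) / (n : ℝ)))) ∧
    (gapExponent 0 = 0 ∧ gapExponent 1 = 0) ∧
    (StrictMonoOn gapExponent (Set.Icc 0 (2 / 3)) ∧
      StrictAntiOn gapExponent (Set.Icc (2 / 3) 1)) ∧
    (∀ x ∈ Set.Icc (0 : ℝ) (1 / 3), x / 2 ≤ gapExponent x) := by
  refine ⟨⟨√2, by positivity, fun n hn s hs ↦ ?_⟩, ⟨gapExponent_zero, gapExponent_one⟩,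
    ⟨strictMonoOn_gapExponent.mono Set.Icc_subset_Iic_self, strictAntiOn_gapExponent⟩,
    fun x hx ↦ half_le_gapExponent hx⟩
  exact choose_div_choose_le_exp_gapExponent (by lia) (by lia)
end
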